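/- Let p be a prime and let l, m be integers with |m| ≥ l > 0. The Baumslag–Solitar group G(l,m) = ⟨a, b; b⁻¹aˡb = aᵐ⟩ is residually a finite p-group if and only if either (i) l = 1 and m ≡ 1 (mod p), or (ii) |m| = l = p^r for some integer r ≥ 0 and, in the case m = −l, additionally p = 2. -/

import Mathlib

/-- A group `X` is *residually a finite p-group* if every non-identity element is excluded
by some normal subgroup of `p`-power index. -/
def ResiduallyPGroup (p : ℕ) (X : Type*) [Group X] : Prop :=
  ∀ x : X, x ≠ 1 → ∃ N : Subgroup X, N.Normal ∧ x ∉ N ∧ ∃ k : ℕ, N.index = p ^ k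

/-- The single relator `b⁻¹aˡb·a⁻ᵐ` of the Baumslag–Solitar group `G(l,m)`,
with `a = FreeGroup.of 0` and `b = FreeGroup.of 1`. -/
def bsRels (l m : ℤ) : Set (FreeGroup (Fin 2)) :=
  {(FreeGroup.of 1)⁻¹ * (FreeGroup.of 0) ^ l * FreeGroup.of 1 * ((FreeGroup.of 0) ^ m)⁻¹}

/-- The Baumslag–Solitar group `G(l,m) = ⟨a, b; b⁻¹aˡb = aᵐ⟩`. -/
def BS (l m : ℤ) : Type := PresentedGroup (bsRels l m)

instance (l m : ℤ) : Group (BS l m) := by delta BS; infer_instance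

/-!
The obstructions come from finite `p`-quotients of `G(l,m)`: in such a quotient conjugation by `b`
has `p`-power order, and `a ^ p ^ r` is a power of `a ^ l` when `p ^ r` is the exact power of `p`
dividing `l`. Hence `b⁻¹ * a ^ p ^ r * b` commutes with `a` in a residually-`p` group, and Britton's
lemma for the HNN extension `G(l,m)` of `ℤ` only allows this when `l` divides `p ^ r`.

Conversely, `G(1,m)` acts by affine maps `x ↦ m ^ i * x + c` on `ℤ/p^N`, and if `m ≡ 1` modulo `p`
this action factors through a finite `p`-group. When `|m| = l = p ^ r`, the subgroup `⟨a ^ l⟩` is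
normal with quotient `ℤ/l * ℤ ≅ F ⋊ ℤ/l` for a free group `F`. Free groups are residually `p` by
Magnus' embedding into unitriangular matrices, and powers of `a` are detected in `G(1, m/l)`.
-/

/-- `x` is excluded by a normal subgroup of `p`-power index; `ResiduallyPGroup p X` says that this
holds for all `x ≠ 1`. -/
def PSeparated (p : ℕ) {X : Type*} [Group X] (x : X) : Prop :=
  ∃ N : Subgroup X, N.Normal ∧ x ∉ N ∧ ∃ k : ℕ, N.index = p ^ k

section Separation

variable {p : ℕ} {X Y : Type*} [Group X] [Group Y]

theorem PSeparated.of_map [Fact p.Prime] (f : X →* Y) {x : X} (h : PSeparated p (f x)) :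
    PSeparated p x := by
  obtain ⟨N, hN, hx, k, hk⟩ := h
  have index_dvd : (N.comap f).index ∣ p ^ k := by
    rw [Subgroup.index_comap, ← hk]
    exact N.relIndex_dvd_index_of_normal f.range
  obtain ⟨j, -, hj⟩ := (Nat.dvd_prime_pow Fact.out).1 index_dvd
  exact ⟨N.comap f, hN.comap f, hx, j, hj⟩

theorem PSeparated.of_conj {g x : X} (h : PSeparated p (g * x * g⁻¹)) : PSeparated p x := by
  obtain ⟨N, hN, hx, hk⟩ := h
  exact ⟨N, hN, fun hxN ↦ hx (hN.conj_mem x hxN g), hk⟩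

namespace ResiduallyPGroup

theorem of_isPGroup [Fact p.Prime] [Finite X] (hX : IsPGroup p X) : ResiduallyPGroup p X :=
  fun _ hx ↦ ⟨⊥, inferInstance, hx, by simpa using IsPGroup.iff_card.1 hX⟩

theorem of_injective [Fact p.Prime] (hY : ResiduallyPGroup p Y) {f : X →* Y}
    (hf : Function.Injective f) : ResiduallyPGroup p X := fun x hx ↦
  PSeparated.of_map f <| hY (f x) <| (map_ne_one_iff f hf).2 hx

theorem of_ker [Fact p.Prime] (hY : ResiduallyPGroup p Y) (f : X →* Y)
    (hker : ∀ x ∈ f.ker, x ≠ 1 → PSeparated p x) : ResiduallyPGroup p X := by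
  intro x hx
  by_cases hfx : f x = 1
  · exact hker x hfx hx
  · exact PSeparated.of_map f (hY (f x) hfx)

theorem eq_one_of_forall_mem [Fact p.Prime] (hX : ResiduallyPGroup p X) {x : X}
    (h : ∀ (N : Subgroup X) [N.Normal], Finite (X ⧸ N) → IsPGroup p (X ⧸ N) → x ∈ N) :
    x = 1 := by
  by_contra hx
  obtain ⟨N, hN, hxN, k, hk⟩ := hX x hx
  have : N.FiniteIndex := ⟨by rw [hk]; exact pow_ne_zero k (Fact.out : p.Prime).ne_zero⟩
  exact hxN (h N inferInstance (IsPGroup.of_card hk))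

end ResiduallyPGroup

theorem exists_normalCore_index_eq_pow [Fact p.Prime] (H : Subgroup X) [H.FiniteIndex] {n : ℕ}
    (hH : ∀ x : X, x ^ p ^ n ∈ H) : ∃ k, H.normalCore.index = p ^ k := by
  refine IsPGroup.iff_card.1 fun q ↦ ⟨n, ?_⟩
  induction q using QuotientGroup.induction_on with
  | H x =>
    rw [← QuotientGroup.mk_pow, QuotientGroup.eq_one_iff]
    intro g
    simpa only [conj_pow] using hH (g * x * g⁻¹)

theorem ResiduallyPGroup.of_normal_range [Fact p.Prime] (hX : ResiduallyPGroup p X) {i : X →* Y}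
    (hi : Function.Injective i) [hnormal : i.range.Normal] {n : ℕ} (hn : i.range.index = p ^ n) :
    ResiduallyPGroup p Y := by
  intro y hy
  by_cases hrange : y ∈ i.range
  swap
  · exact ⟨i.range, hnormal, hrange, n, hn⟩
  obtain ⟨x, rfl⟩ := hrange
  obtain ⟨N, hN, hxN, k, hk⟩ := hX x (by rintro rfl; exact hy (map_one i))
  have index_map : (N.map i).index = p ^ (n + k) := by
    rw [Subgroup.index_map_of_injective N hi, hk, hn, ← pow_add, add_comm]
  have : (N.map i).FiniteIndex := ⟨by rw [index_map]; exact pow_ne_zero _ (NeZero.ne p)⟩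
  have pow_mem (z : Y) : z ^ p ^ (n + k) ∈ N.map i := by
    obtain ⟨w, hw⟩ := i.range.pow_index_mem z
    rw [hn] at hw
    rw [pow_add, pow_mul, ← hw, ← map_pow, ← hk]
    exact Subgroup.mem_map_of_mem i (N.pow_index_mem w)
  exact ⟨(N.map i).normalCore, inferInstance,
    fun h ↦ hxN <| (Subgroup.mem_map_iff_mem hi).1 <| (N.map i).normalCore_le h,
    exists_normalCore_index_eq_pow _ pow_mem⟩

theorem ResiduallyPGroup.semidirectProduct [Fact p.Prime] (hX : ResiduallyPGroup p X) {C : Type*}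
    [Group C] [Finite C] (hC : IsPGroup p C) (φ : C →* MulAut X) :
    ResiduallyPGroup p (X ⋊[φ] C) := by
  obtain ⟨n, hn⟩ := IsPGroup.iff_card.1 hC
  have range_inl := SemidirectProduct.range_inl_eq_ker_rightHom (φ := φ)
  have : (SemidirectProduct.inl : X →* X ⋊[φ] C).range.Normal := by
    rw [range_inl]; infer_instance
  refine hX.of_normal_range SemidirectProduct.inl_injective (n := n) ?_
  rw [range_inl, Subgroup.index_ker,
    MonoidHom.range_eq_top.2 SemidirectProduct.rightHom_surjective, Subgroup.card_top, hn]

end Separation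

section Integers

variable {p : ℕ}

theorem exists_intCast_zmod_pow_ne_zero (hp : 1 < p) {k : ℤ} (hk : k ≠ 0) :
    ∃ N : ℕ, (k : ZMod (p ^ N)) ≠ 0 := by
  refine ⟨k.natAbs, fun h ↦ (Nat.lt_pow_self (n := k.natAbs) hp).not_ge ?_⟩
  rw [ZMod.intCast_zmod_eq_zero_iff_dvd, Int.natCast_dvd] at h
  exact Nat.le_of_dvd (Int.natAbs_pos.2 hk) h

theorem isPGroup_multiplicative_zmod_pow [Fact p.Prime] (N : ℕ) :
    IsPGroup p (Multiplicative (ZMod (p ^ N))) :=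
  IsPGroup.of_card (n := N) (by simp)

theorem residuallyPGroup_multiplicative_int [Fact p.Prime] :
    ResiduallyPGroup p (Multiplicative ℤ) := by
  intro x hx
  obtain ⟨N, hN⟩ := exists_intCast_zmod_pow_ne_zero (Fact.out : p.Prime).one_lt (k := x.toAdd) hx
  exact PSeparated.of_map (Int.castAddHom (ZMod (p ^ N))).toMultiplicative <|
    ResiduallyPGroup.of_isPGroup (isPGroup_multiplicative_zmod_pow N) _ hN

end Integers

section Unipotent

theorem one_add_natCast_mul_pow_pow_eq_one {p N : ℕ} {R : Type*} [Ring R]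
    (hN : (p : R) ^ N = 0) (t : R) : (1 + p * t) ^ p ^ N = 1 := by
  obtain ⟨c, hc⟩ := dvd_sub_pow_of_dvd_sub (R := Polynomial ℤ) (p := p)
    (a := 1 + (p : Polynomial ℤ) * Polynomial.X) (b := 1) (by simp) N
  have eval_at_t := congrArg (Polynomial.aeval t) hc
  simp only [map_sub, map_pow, map_add, map_one, map_mul, map_natCast, Polynomial.aeval_X,
    one_pow] at eval_at_t
  rwa [pow_succ (p : R) N, hN, zero_mul, zero_mul, sub_eq_zero] at eval_at_t

theorem exists_pow_prime_pow_eq_one_of_unipotent {p N K : ℕ} [hp : Fact p.Prime] {R : Type*}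
    [Ring R] (hN : (p : R) ^ N = 0) {x : R} (hx : (x - 1) ^ K = 0) : ∃ k : ℕ, x ^ p ^ k = 1 := by
  obtain ⟨s, hs⟩ := (Commute.one_right (x - 1)).exists_add_pow_prime_pow_eq hp.out K
  have pow_eq : x ^ p ^ K = 1 + p * ((x - 1) * s) := by
    have pow_sub_one : (x - 1) ^ p ^ K = 0 :=
      pow_eq_zero_of_le (Nat.lt_pow_self hp.out.one_lt).le hx
    simpa only [sub_add_cancel, pow_sub_one, one_pow, zero_add, mul_one, mul_assoc] using hs
  exact ⟨K + N, by rw [pow_add, pow_mul, pow_eq, one_add_natCast_mul_pow_pow_eq_one hN]⟩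

theorem PSeparated.of_monoidHom {p : ℕ} [Fact p.Prime] {X A : Type*} [Group X] [Monoid A]
    [Finite A] (f : X →* A) (hf : ∀ y, ∃ k : ℕ, f y ^ p ^ k = 1) {x : X} (hx : f x ≠ 1) :
    PSeparated p x := by
  have range_isPGroup : IsPGroup p f.toHomUnits.range := by
    rintro ⟨_, y, rfl⟩
    obtain ⟨k, hk⟩ := hf y
    exact ⟨k, Subtype.ext <| Units.ext <| by simpa using hk⟩
  refine PSeparated.of_map f.toHomUnits.rangeRestrict <|
    ResiduallyPGroup.of_isPGroup range_isPGroup _ fun h ↦ hx ?_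
  exact congrArg (fun y : f.toHomUnits.range ↦ ((y : Aˣ) : A)) h

end Unipotent

section Unitriangular

variable (R : Type*) [CommRing R] (n : ℕ)

/-- The monoid of `n × n` upper triangular matrices with ones on the diagonal. -/
def unitriangularSubmonoid : Submonoid (Matrix (Fin n) (Fin n) R) where
  carrier := {M | M.IsUpperTriangular ∧ ∀ i, M i i = 1}
  one_mem' := ⟨Matrix.blockTriangular_one, fun _ ↦ Matrix.one_apply_eq _⟩
  mul_mem' := by
    rintro M P ⟨hM, hM'⟩ ⟨hP, hP'⟩
    refine ⟨hM.mul hP, fun i ↦ ?_⟩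
    rw [Matrix.mul_apply, Finset.sum_eq_single i _ (by simp), hM', hP', one_mul]
    intro j _ hji
    rcases lt_or_gt_of_ne hji with hlt | hgt
    · rw [hM hlt, zero_mul]
    · rw [hP hgt, mul_zero]

variable {R n}

theorem sub_one_pow_eq_zero_of_mem_unitriangularSubmonoid {M : Matrix (Fin n) (Fin n) R}
    (hM : M ∈ unitriangularSubmonoid R n) : (M - 1) ^ n = 0 := by
  have cayley_hamilton := M.aeval_self_charpoly
  rw [M.charpoly_of_isUpperTriangular hM.1] at cayley_hamilton
  simpa [hM.2] using cayley_hamilton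

end Unitriangular

section Superdiagonal

variable {R : Type*} [CommRing R] {n : ℕ}

/-- The `n × n` matrix with entries `c 0, c 1, …` just above the diagonal and zeros elsewhere. -/
def superdiagonal (n : ℕ) (c : ℕ → R) : Matrix (Fin n) (Fin n) R :=
  Matrix.of fun s t ↦ if (t : ℕ) = s + 1 then c s else 0

theorem smul_superdiagonal (e : ℤ) (c : ℕ → R) :
    e • superdiagonal n c = superdiagonal n (e • c) := by
  ext s t
  simp [superdiagonal]

theorem superdiagonal_mul_apply (c : ℕ → R) (P : Matrix (Fin n) (Fin n) R) {s : ℕ}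
    (hs : s + 1 < n) (t : Fin n) :
    (superdiagonal n c * P) ⟨s, by lia⟩ t = c s * P ⟨s + 1, hs⟩ t := by
  rw [Matrix.mul_apply, Finset.sum_eq_single ⟨s + 1, hs⟩ _ (by simp)]
  · simp [superdiagonal]
  · intro u _ hu
    simp [superdiagonal, show (u : ℕ) ≠ s + 1 from fun h ↦ hu (Fin.ext h)]

theorem superdiagonal_mul_self {c : ℕ → R} (hc : ∀ s, c s * c (s + 1) = 0) :
    superdiagonal n c * superdiagonal n c = 0 := by
  ext s t
  rw [Matrix.mul_apply]
  refine Finset.sum_eq_zero fun u _ ↦ ?_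
  simp only [superdiagonal, Matrix.of_apply]
  split_ifs with hu ht
  · rw [hu, hc]
  all_goals simp

theorem one_add_superdiagonal_mem (c : ℕ → R) :
    1 + superdiagonal n c ∈ unitriangularSubmonoid R n := by
  refine ⟨fun s t hts ↦ ?_, fun s ↦ by simp [superdiagonal]⟩
  have hts : t < s := hts
  simp [superdiagonal, Matrix.one_apply_ne hts.ne', show (t : ℕ) ≠ s + 1 by lia]

theorem prod_one_add_superdiagonal_apply_of_lt (C : List (ℕ → R)) {s t : Fin n}
    (hst : s + C.length < t) :
    (C.map fun c ↦ 1 + superdiagonal n c : List (Matrix _ _ R)).prod s t = 0 := by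
  induction C generalizing s with
  | nil => exact Matrix.one_apply_ne (Fin.ne_of_lt hst)
  | cons c C ih =>
    rw [List.length_cons] at hst
    rw [List.map_cons, List.prod_cons, add_mul, one_mul, Matrix.add_apply, ih (by lia),
      superdiagonal_mul_apply c _ (s := s) (by lia), ih (by simp; lia), mul_zero, add_zero]

theorem prod_one_add_superdiagonal_apply (C : List (ℕ → R)) {s t : Fin n}
    (hst : s + C.length = t) :
    (C.map fun c ↦ 1 + superdiagonal n c : List (Matrix _ _ R)).prod s t =
      ((C.zipIdx s).map fun c ↦ c.1 c.2).prod := by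
  induction C generalizing s with
  | nil =>
    rw [show s = t from Fin.ext hst]
    simp
  | cons c C ih =>
    rw [List.length_cons] at hst
    rw [List.map_cons, List.prod_cons, add_mul, one_mul, Matrix.add_apply,
      prod_one_add_superdiagonal_apply_of_lt C (by lia), zero_add,
      superdiagonal_mul_apply c _ (s := s) (by lia), ih (by simp; lia), List.zipIdx_cons,
      List.map_cons, List.prod_cons]

end Superdiagonal

section Magnus

/-- The homomorphism `e ↦ 1 + e x` from the integers attached to an element `x` of square zero. -/
def oneAddSMulHom {A : Type*} [Ring A] (x : A) (hx : x * x = 0) : Multiplicative ℤ →* A where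
  toFun e := 1 + e.toAdd • x
  map_one' := by simp
  map_mul' e f := by
    simp only [toAdd_mul, add_smul, add_mul, mul_add, smul_mul_smul_comm, hx, smul_zero, one_mul,
      mul_one, add_zero]
    abel

variable {ι : Type*} (R : Type*) [CommRing R] (I : List ι)

open Classical in
/-- The indicator of the positions at which `i` occurs in `I`. -/
noncomputable def positionIndicator (i : ι) (s : ℕ) : R := if I[s]? = some i then 1 else 0

variable {I}

theorem positionIndicator_mul_succ (hI : I.IsChain (· ≠ ·)) (i : ι) (s : ℕ) :
    positionIndicator R I i s * positionIndicator R I i (s + 1) = 0 := by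
  simp only [positionIndicator]
  split_ifs with hs hs'
  · obtain ⟨hlt, heq⟩ := List.getElem?_eq_some_iff.1 hs
    obtain ⟨hlt', heq'⟩ := List.getElem?_eq_some_iff.1 hs'
    exact absurd (heq.trans heq'.symm) (List.isChain_iff_getElem.1 hI s hlt')
  all_goals simp

/-- The representation of a free product of infinite cyclic groups which maps the generator with
index `i` to `1 + Xᵢ`, where `Xᵢ` has ones just above the diagonal at the positions of `i` in `I`.
It is a truncation of Magnus' power series representation, adapted to words with indices `I`. -/
noncomputable def magnusHom (hI : I.IsChain (· ≠ ·)) :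
    Monoid.CoprodI (fun _ : ι ↦ Multiplicative ℤ) →*
      Matrix (Fin (I.length + 1)) (Fin (I.length + 1)) R :=
  Monoid.CoprodI.lift fun i ↦ oneAddSMulHom (superdiagonal _ (positionIndicator R I i))
    (superdiagonal_mul_self (positionIndicator_mul_succ R hI i))

theorem magnusHom_of (hI : I.IsChain (· ≠ ·)) (i : ι) (e : Multiplicative ℤ) :
    magnusHom R hI (Monoid.CoprodI.of (i := i) e) =
      1 + superdiagonal _ (e.toAdd • positionIndicator R I i) := by
  rw [magnusHom, Monoid.CoprodI.lift_of, ← smul_superdiagonal]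
  rfl

theorem magnusHom_mem_unitriangularSubmonoid (hI : I.IsChain (· ≠ ·))
    (x : Monoid.CoprodI fun _ : ι ↦ Multiplicative ℤ) :
    magnusHom R hI x ∈ unitriangularSubmonoid R (I.length + 1) := by
  induction x using Monoid.CoprodI.induction_on with
  | one => rw [map_one]; exact one_mem _
  | of i e => rw [magnusHom_of]; exact one_add_superdiagonal_mem _
  | mul x y hx hy => rw [map_mul]; exact mul_mem hx hy

theorem magnusHom_prod_apply_last (L : List (Σ _ : ι, Multiplicative ℤ))
    (hL : (L.map Sigma.fst).IsChain (· ≠ ·)) :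
    magnusHom R hL (L.map fun l ↦ Monoid.CoprodI.of (i := l.1) l.2).prod 0 (Fin.last _) =
      ((L.map fun l ↦ l.2.toAdd).prod : ℤ) := by
  let weight (l : Σ _ : ι, Multiplicative ℤ) : ℕ → R :=
    l.2.toAdd • positionIndicator R (L.map Sigma.fst) l.1
  have map_prod : magnusHom R hL (L.map fun l ↦ Monoid.CoprodI.of (i := l.1) l.2).prod =
      ((L.map weight).map fun c ↦ 1 + superdiagonal _ c).prod := by
    rw [map_list_prod, List.map_map, List.map_map]
    exact congrArg List.prod (List.map_congr_left fun l _ ↦ magnusHom_of R hL l.1 l.2)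
  have weight_apply : ∀ l ∈ L.zipIdx, weight l.1 l.2 = ((l.1.2.toAdd : ℤ) : R) := by
    intro l hl
    have : (L.map Sigma.fst)[l.2]? = some l.1.1 := by
      rw [List.getElem?_map, List.mem_zipIdx_iff_getElem?.1 hl, Option.map_some]
    simp [weight, positionIndicator, this]
  rw [map_prod, prod_one_add_superdiagonal_apply _ (by simp), Int.cast_list_prod]
  rw [List.zipIdx_map, List.map_map, List.map_map]
  calc ((L.zipIdx 0).map fun l ↦ weight l.1 l.2).prod
    _ = ((L.zipIdx 0).map fun l ↦ ((l.1.2.toAdd : ℤ) : R)).prod := by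
      rw [List.map_congr_left weight_apply]
    _ = (L.map fun l ↦ ((l.2.toAdd : ℤ) : R)).prod := by
      conv_rhs => rw [← List.zipIdx_map_fst 0 L, List.map_map]
      rfl

theorem residuallyPGroup_coprodI_int (p : ℕ) [hp : Fact p.Prime] (ι : Type*) :
    ResiduallyPGroup p (Monoid.CoprodI fun _ : ι ↦ Multiplicative ℤ) := by
  classical
  intro x hx
  obtain ⟨w, rfl⟩ := Monoid.CoprodI.Word.equiv.symm.surjective x
  have exponents_ne_zero : (w.toList.map fun l ↦ l.2.toAdd).prod ≠ 0 :=
    List.prod_ne_zero fun h ↦ by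
      obtain ⟨l, hl, hl0⟩ := List.mem_map.1 h
      exact w.ne_one l hl (Multiplicative.toAdd.injective hl0)
  obtain ⟨N, hN⟩ := exists_intCast_zmod_pow_ne_zero hp.out.one_lt exponents_ne_zero
  have chain := (List.isChain_map Sigma.fst).2 w.chain_ne
  refine PSeparated.of_monoidHom (magnusHom (ZMod (p ^ N)) chain) (fun y ↦ ?_) fun h ↦ hN ?_
  · refine exists_pow_prime_pow_eq_one_of_unipotent (N := N) ?_
      (sub_one_pow_eq_zero_of_mem_unitriangularSubmonoid
        (magnusHom_mem_unitriangularSubmonoid (ZMod (p ^ N)) chain y))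
    rw [← Nat.cast_pow, ← map_natCast (Matrix.scalar _), ZMod.natCast_self, map_zero]
  · rw [← magnusHom_prod_apply_last (ZMod (p ^ N)) w.toList chain]
    have toList_ne_nil : w.toList ≠ [] := fun hnil ↦
      hx (show w.prod = 1 by simp [Monoid.CoprodI.Word.prod, hnil])
    have zero_lt_last : (0 : Fin ((w.toList.map Sigma.fst).length + 1)) < Fin.last _ := by
      simpa [Fin.lt_def, List.length_pos_iff] using toList_ne_nil
    exact (congrFun₂ h 0 (Fin.last _)).trans (Matrix.one_apply_ne zero_lt_last.ne)

theorem residuallyPGroup_freeGroup (p : ℕ) [Fact p.Prime] (ι : Type*) :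
    ResiduallyPGroup p (FreeGroup ι) := by
  let f : FreeGroup ι →* Monoid.CoprodI (fun _ : ι ↦ Multiplicative ℤ) :=
    FreeGroup.lift fun i ↦ Monoid.CoprodI.of (i := i) (Multiplicative.ofAdd 1)
  let g : Monoid.CoprodI (fun _ : ι ↦ Multiplicative ℤ) →* FreeGroup ι :=
    Monoid.CoprodI.lift fun i ↦ zpowersHom _ (FreeGroup.of i)
  have left_inverse : g.comp f = MonoidHom.id _ := by
    ext i
    simp [f, g]
  exact (residuallyPGroup_coprodI_int p ι).of_injective (f := f)
    (Function.LeftInverse.injective (DFunLike.congr_fun left_inverse))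

end Magnus

namespace BS

variable (l m : ℤ)

/-- The generator `a` of the Baumslag–Solitar group. -/
def a : BS l m := PresentedGroup.of (rels := bsRels l m) 0

/-- The generator `b` of the Baumslag–Solitar group, which conjugates `aˡ` to `aᵐ`. -/
def b : BS l m := PresentedGroup.of (rels := bsRels l m) 1

theorem inv_b_mul_a_zpow_mul_b : (b l m)⁻¹ * a l m ^ l * b l m = a l m ^ m := by
  have relator := PresentedGroup.one_of_mem (Set.mem_singleton _ :
    (FreeGroup.of 1)⁻¹ * (FreeGroup.of 0) ^ l * FreeGroup.of 1 * ((FreeGroup.of 0) ^ m)⁻¹ ∈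
      bsRels l m)
  simp only [map_mul, map_inv, map_zpow] at relator
  exact mul_inv_eq_one.1 relator

theorem semiconjBy_b : SemiconjBy (b l m) (a l m ^ m) (a l m ^ l) := by
  rw [SemiconjBy, ← inv_b_mul_a_zpow_mul_b, mul_assoc, mul_inv_cancel_left]

theorem closure_a_b : Subgroup.closure {a l m, b l m} = ⊤ := by
  refine (Subgroup.eq_top_iff' _).2 fun x ↦ PresentedGroup.generated_by (bsRels l m)
    (Subgroup.closure {a l m, b l m}) (fun i ↦ Subgroup.subset_closure ?_) x
  fin_cases i
  · exact Set.mem_insert _ _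
  · exact Set.mem_insert_of_mem _ rfl

variable {l m} {G : Type*} [Group G]

/-- The homomorphism from `G(l,m)` given by the images of the two generators. -/
def lift (x y : G) (h : y⁻¹ * x ^ l * y = x ^ m) : BS l m →* G :=
  PresentedGroup.toGroup (f := ![x, y]) (rels := bsRels l m) <| by
    rintro _ rfl
    simp [h]

variable {x y : G} (h : y⁻¹ * x ^ l * y = x ^ m)

@[simp]
theorem lift_a : lift x y h (a l m) = x :=
  PresentedGroup.toGroup.of (f := ![x, y]) (rels := bsRels l m) _

@[simp]
theorem lift_b : lift x y h (b l m) = y :=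
  PresentedGroup.toGroup.of (f := ![x, y]) (rels := bsRels l m) _

theorem hom_ext {f g : BS l m →* G} (ha : f (a l m) = g (a l m)) (hb : f (b l m) = g (b l m)) :
    f = g := by
  refine MonoidHom.eq_of_eqOn_dense (closure_a_b l m) ?_
  rintro _ (rfl | rfl)
  exacts [ha, hb]

variable (l m) in
/-- The homomorphism `G(l,m) → G(m,l)` which fixes `a` and inverts `b`. -/
def swap : BS l m →* BS m l := lift (a m l) (b m l)⁻¹ <| by
  rw [inv_inv, (semiconjBy_b m l).eq, mul_inv_cancel_right]

@[simp]
theorem swap_a : swap l m (a l m) = a m l := lift_a _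

@[simp]
theorem swap_b : swap l m (b l m) = (b m l)⁻¹ := lift_b _

variable (l m) in
theorem swap_injective : Function.Injective (swap l m) := by
  have left_inverse : (swap m l).comp (swap l m) = MonoidHom.id _ := hom_ext (by simp) (by simp)
  exact Function.LeftInverse.injective (DFunLike.congr_fun left_inverse)

end BS

section HNN

open HNNExtension

variable {G : Type*} [Group G]

theorem not_commute_t_mul_of_mul_inv_t {A B : Subgroup G} {φ : A ≃* B} {g h : G} (hg : g ∉ A)
    (hh : h ∉ B) : ¬ Commute (t * of g * t⁻¹ : HNNExtension G A B φ) (of h) := by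
  intro hcomm
  let w : NormalWord.ReducedWord G A B :=
    { head := 1
      toList := [(1, g), (-1, h), (1, g⁻¹), (-1, 1)]
      chain := by
        simp only [List.isChain_cons_cons, toSubgroup_one, toSubgroup_neg_one, inv_mem_iff]
        exact ⟨fun hmem ↦ absurd hmem hg, fun hmem ↦ absurd hmem hh, fun hmem ↦ absurd hmem hg,
          List.isChain_singleton _⟩ }
  have prod_w : w.prod φ = of h := by
    rw [← mul_inv_eq_iff_eq_mul.2 hcomm.eq]
    simp [NormalWord.ReducedWord.prod, w, mul_assoc]
  have toList_eq_nil := ReducedWord.toList_eq_nil_of_mem_of_range φ w ⟨h, prod_w.symm⟩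
  exact List.cons_ne_nil _ _ toList_eq_nil

/-- The isomorphism between cyclic groups of the same order which matches given generators. -/
noncomputable def zpowersMulEquiv {x y : G} (h : orderOf x = orderOf y) :
    Subgroup.zpowers x ≃* Subgroup.zpowers y :=
  mulEquivOfOrderOfEq (g := ⟨x, Subgroup.mem_zpowers x⟩) (g' := ⟨y, Subgroup.mem_zpowers y⟩)
    (by rintro ⟨_, k, rfl⟩; exact ⟨k, rfl⟩) (by rintro ⟨_, k, rfl⟩; exact ⟨k, rfl⟩) (by simpa)

theorem t_mul_of_mul_inv_t {x y : G} (h : orderOf x = orderOf y) :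
    (t * of x * t⁻¹ : HNNExtension G _ _ (zpowersMulEquiv h)) = of y := by
  have conj := equiv_eq_conj (φ := zpowersMulEquiv h) ⟨x, Subgroup.mem_zpowers x⟩
  rw [← conj, zpowersMulEquiv, mulEquivOfOrderOfEq_apply_gen]

end HNN

theorem zpow_mem_zpowers_zpow_iff {G : Type*} [Group G] {g : G} (hg : ¬ IsOfFinOrder g)
    {k l : ℤ} : g ^ k ∈ Subgroup.zpowers (g ^ l) ↔ l ∣ k := by
  simp only [Subgroup.mem_zpowers_iff, ← zpow_mul,
    (injective_zpow_iff_not_isOfFinOrder.2 hg).eq_iff, dvd_def, eq_comm]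

theorem orderOf_zpow_eq_orderOf_zpow {G : Type*} [Group G] {g : G} (hg : ¬ IsOfFinOrder g)
    {l m : ℤ} (hl : l ≠ 0) (hm : m ≠ 0) : orderOf (g ^ l) = orderOf (g ^ m) := by
  have orderOf_zpow {k : ℤ} (hk : k ≠ 0) : orderOf (g ^ k) = 0 :=
    orderOf_eq_zero fun h ↦ by
      obtain ⟨n, hn, hgn⟩ := isOfFinOrder_iff_zpow_eq_one.1 h
      exact hg (isOfFinOrder_iff_zpow_eq_one.2 ⟨k * n, mul_ne_zero hk hn, by rwa [zpow_mul]⟩)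
  rw [orderOf_zpow hl, orderOf_zpow hm]

namespace BS

variable {l m : ℤ} {G : Type*} [Group G] {g : G}

/-- The homomorphism from `G(l,m)` to the HNN extension of a group containing `g` in which the
stable letter conjugates `gˡ` to `gᵐ`. It maps `a` to `g` and `b⁻¹` to the stable letter. -/
noncomputable def toHNN (h : orderOf (g ^ l) = orderOf (g ^ m)) :
    BS l m →* HNNExtension G _ _ (zpowersMulEquiv h) :=
  lift (HNNExtension.of g) HNNExtension.t⁻¹ <| by
    rw [← map_zpow, ← map_zpow, inv_inv, t_mul_of_mul_inv_t h]

theorem not_isOfFinOrder_ofAdd_one : ¬ IsOfFinOrder (Multiplicative.ofAdd (1 : ℤ)) :=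
  not_isOfFinOrder_of_isMulTorsionFree (by simp)

theorem not_isOfFinOrder_a (hl : l ≠ 0) (hm : m ≠ 0) : ¬ IsOfFinOrder (a l m) := by
  intro ha
  have of_isOfFinOrder :=
    (toHNN (orderOf_zpow_eq_orderOf_zpow not_isOfFinOrder_ofAdd_one hl hm)).isOfFinOrder ha
  rw [toHNN, lift_a, ← orderOf_pos_iff, orderOf_injective _ (HNNExtension.of_injective _),
    orderOf_pos_iff] at of_isOfFinOrder
  exact not_isOfFinOrder_ofAdd_one of_isOfFinOrder

theorem dvd_of_commute (hl : l ≠ 0) (hm : m ≠ 0) (hm' : ¬ IsUnit m) {k : ℤ}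
    (h : Commute ((b l m)⁻¹ * a l m ^ k * b l m) (a l m)) : l ∣ k := by
  by_contra hlk
  have map_commute :=
    h.map (toHNN (orderOf_zpow_eq_orderOf_zpow not_isOfFinOrder_ofAdd_one hl hm))
  simp only [map_mul, map_inv, map_zpow, toHNN, lift_a, lift_b, inv_inv] at map_commute
  rw [← map_zpow HNNExtension.of] at map_commute
  refine not_commute_t_mul_of_mul_inv_t ?_ ?_ map_commute
  · rwa [zpow_mem_zpowers_zpow_iff not_isOfFinOrder_ofAdd_one]
  · rwa [isUnit_iff_dvd_one, ← zpow_mem_zpowers_zpow_iff not_isOfFinOrder_ofAdd_one,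
      zpow_one] at hm'

end BS

section ConjugatePowers

variable {X : Type*} [Group X] {a b x : X} {l m j : ℤ}

theorem semiconjBy_pow_zpow_pow (h : SemiconjBy b (x ^ j) x) (n : ℕ) :
    SemiconjBy (b ^ n) (x ^ j ^ n) x := by
  induction n with
  | zero => simp
  | succ n ih =>
    rw [pow_succ b, pow_succ', zpow_mul]
    exact ih.mul_left (h.zpow_right (j ^ n))

theorem dvd_of_semiconjBy_zpow (ha : IsOfFinOrder a) {d : ℕ} (hd : d ∣ orderOf a)
    (h : SemiconjBy b (a ^ m) (a ^ l)) (hl : (d : ℤ) ∣ l) : (d : ℤ) ∣ m := by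
  obtain ⟨e, he⟩ := hd
  have e_ne_zero : (e : ℤ) ≠ 0 := by
    have := ha.orderOf_pos
    rintro he0
    simp_all
  have zpow_l_eq_one : (a ^ l) ^ (e : ℤ) = 1 := by
    rw [← zpow_mul, ← orderOf_dvd_iff_zpow_eq_one, he, Nat.cast_mul]
    exact mul_dvd_mul_right hl _
  have zpow_m_eq_one : (a ^ m) ^ (e : ℤ) = 1 := by
    simpa [SemiconjBy, zpow_l_eq_one] using (h.zpow_right e).eq
  rw [← zpow_mul, ← orderOf_dvd_iff_zpow_eq_one, he, Nat.cast_mul] at zpow_m_eq_one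
  exact Int.dvd_of_mul_dvd_mul_right e_ne_zero zpow_m_eq_one

variable {p : ℕ} [hp : Fact p.Prime]

namespace ResiduallyPGroup

theorem pow_dvd_of_semiconjBy_zpow (hX : ResiduallyPGroup p X) (ha : ¬ IsOfFinOrder a)
    (h : SemiconjBy b (a ^ m) (a ^ l)) {k : ℕ} (hl : (p : ℤ) ^ k ∣ l) : (p : ℤ) ^ k ∣ m := by
  by_contra hm
  refine ha (isOfFinOrder_iff_pow_eq_one.2 ⟨p ^ k, pow_pos hp.out.pos k, ?_⟩)
  refine hX.eq_one_of_forall_mem fun N _ _ hN ↦ (QuotientGroup.eq_one_iff _).1 ?_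
  obtain ⟨n, hn⟩ := IsPGroup.iff_orderOf.1 hN a
  rw [QuotientGroup.mk_pow, ← orderOf_dvd_iff_pow_eq_one, hn]
  refine pow_dvd_pow p (le_of_not_ge fun hkn ↦ hm ?_)
  exact_mod_cast dvd_of_semiconjBy_zpow (isOfFinOrder_of_finite (a : X ⧸ N))
    (hn ▸ pow_dvd_pow p hkn) (h.map (QuotientGroup.mk' N)) (mod_cast hl)

theorem modEq_one_of_semiconjBy_zpow (hX : ResiduallyPGroup p X) (hx : x ≠ 1)
    (h : SemiconjBy b (x ^ j) x) : j ≡ 1 [ZMOD p] := by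
  by_contra hj
  refine hx (hX.eq_one_of_forall_mem fun N _ _ hN ↦ ?_)
  by_contra hxN
  obtain ⟨n, hn⟩ := hN (b : X ⧸ N)
  have p_dvd : p ∣ orderOf (x : X ⧸ N) :=
    hN.dvd_orderOf (mt (QuotientGroup.eq_one_iff x).1 hxN)
  have conj := semiconjBy_pow_zpow_pow (j := j)
    (by simpa only [map_zpow] using h.map (QuotientGroup.mk' N)) (p ^ n)
  have pow_modEq : j ^ p ^ n ≡ 1 [ZMOD orderOf (x : X ⧸ N)] := by
    simpa [← zpow_eq_zpow_iff_modEq, SemiconjBy, hn] using conj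
  refine hj ((ZMod.intCast_eq_intCast_iff j 1 p).1 ?_)
  rw [← ZMod.pow_card_pow (n := n) (j : ZMod p), ← Int.cast_pow, ZMod.intCast_eq_intCast_iff]
  exact pow_modEq.of_dvd (Int.natCast_dvd_natCast.2 p_dvd)

theorem commute_of_semiconjBy_zpow (hX : ResiduallyPGroup p X) {r : ℕ} {l' : ℤ}
    (hl' : ¬ (p : ℤ) ∣ l') (hl : l = (p : ℤ) ^ r * l') (h : SemiconjBy b (a ^ m) (a ^ l)) :
    Commute (b⁻¹ * a ^ (p : ℤ) ^ r * b) a := by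
  rw [← commutatorElement_eq_one_iff_commute]
  refine hX.eq_one_of_forall_mem fun N _ _ hN ↦ (QuotientGroup.eq_one_iff _).1 ?_
  rw [← QuotientGroup.mk'_apply, map_commutatorElement, commutatorElement_eq_one_iff_commute]
  have conj := h.map (QuotientGroup.mk' N)
  simp only [map_mul, map_inv, map_zpow, hl, zpow_mul] at conj ⊢
  generalize QuotientGroup.mk' N a = α at conj ⊢
  generalize QuotientGroup.mk' N b = β at conj ⊢
  obtain ⟨u, hu : _ = α ^ (p : ℤ) ^ r⟩ :
      α ^ (p : ℤ) ^ r ∈ Subgroup.zpowers ((α ^ (p : ℤ) ^ r) ^ l') := by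
    obtain ⟨n, hn⟩ := IsPGroup.iff_orderOf.1 hN (α ^ (p : ℤ) ^ r)
    rw [mem_zpowers_zpow_iff, hn, ← Int.isCoprime_iff_gcd_eq_one, Nat.cast_pow]
    exact (((Nat.prime_iff_prime_int.1 hp.out).coprime_iff_not_dvd.2 hl').pow_left).symm
  have conj_eq_zpow : β⁻¹ * α ^ (p : ℤ) ^ r * β = (α ^ m) ^ u := by
    rw [mul_assoc, ← hu, ← (conj.zpow_right u).eq, inv_mul_cancel_left]
  rw [conj_eq_zpow]
  exact ((Commute.refl α).zpow_left m).zpow_left u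

end ResiduallyPGroup

end ConjugatePowers

namespace BS

variable {p : ℕ} [hp : Fact p.Prime] {l m : ℤ}

theorem exists_abs_eq_pow (hX : ResiduallyPGroup p (BS l m)) (hl : l ≠ 0) (hm : m ≠ 0)
    (hm' : ¬ IsUnit m) : ∃ r : ℕ, |l| = (p : ℤ) ^ r := by
  have finite : FiniteMultiplicity (p : ℤ) l :=
    Int.finiteMultiplicity_iff.2 ⟨by simpa using hp.out.ne_one, hl⟩
  obtain ⟨l', hl_eq, hl'⟩ := finite.exists_eq_pow_mul_and_not_dvd
  generalize multiplicity (p : ℤ) l = r at hl_eq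
  have dvd_pow : l ∣ (p : ℤ) ^ r :=
    dvd_of_commute hl hm hm' (hX.commute_of_semiconjBy_zpow hl' hl_eq (semiconjBy_b l m))
  refine ⟨r, Int.dvd_antisymm (abs_nonneg l) (by positivity) ?_ ?_⟩
  · rwa [abs_dvd]
  · rw [dvd_abs, hl_eq]
    exact dvd_mul_right _ _

theorem dvd_of_residuallyPGroup (hX : ResiduallyPGroup p (BS l m)) (hl : l ≠ 0) (hm : m ≠ 0)
    (hm' : ¬ IsUnit m) : l ∣ m := by
  obtain ⟨r, hr⟩ := exists_abs_eq_pow hX hl hm hm'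
  have pow_dvd : (p : ℤ) ^ r ∣ l := by rw [← hr, abs_dvd]
  rw [← abs_dvd, hr]
  exact hX.pow_dvd_of_semiconjBy_zpow (not_isOfFinOrder_a hl hm) (semiconjBy_b l m) pow_dvd

theorem abs_eq_abs_of_residuallyPGroup (hX : ResiduallyPGroup p (BS l m)) (hl : l ≠ 0)
    (hm : m ≠ 0) (hl' : ¬ IsUnit l) (hm' : ¬ IsUnit m) : |m| = |l| :=
  Int.dvd_antisymm (abs_nonneg m) (abs_nonneg l)
    ((abs_dvd_abs _ _).2 (dvd_of_residuallyPGroup (hX.of_injective (swap_injective m l)) hm hl hl'))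
    ((abs_dvd_abs _ _).2 (dvd_of_residuallyPGroup hX hl hm hm'))

theorem modEq_one_of_residuallyPGroup {ε : ℤ} (hX : ResiduallyPGroup p (BS l (l * ε)))
    (hl : l ≠ 0) (hε : ε ≠ 0) : ε ≡ 1 [ZMOD p] := by
  refine hX.modEq_one_of_semiconjBy_zpow (b := b _ _) (x := a l (l * ε) ^ l) (fun h ↦ ?_) ?_
  · exact not_isOfFinOrder_a hl (mul_ne_zero hl hε) (isOfFinOrder_iff_zpow_eq_one.2 ⟨l, hl, h⟩)
  · rw [← zpow_mul]
    exact semiconjBy_b l (l * ε)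

theorem eq_two_of_residuallyPGroup_neg (hX : ResiduallyPGroup p (BS l (-l))) (hl : l ≠ 0) :
    p = 2 := by
  rw [← mul_neg_one] at hX
  have dvd_two : (p : ℤ) ∣ 2 := (modEq_one_of_residuallyPGroup hX hl (by decide)).dvd
  exact (Nat.prime_dvd_prime_iff_eq hp.out Nat.prime_two).1 (by exact_mod_cast dvd_two)

end BS

section NormalForm

variable {G : Type*} [Group G] {a b : G} {m : ℤ}

theorem pow_mul_zpow_mul_inv_pow (h : SemiconjBy b (a ^ m) a) (i j d : ℕ) (k : ℤ) :
    b ^ i * a ^ k * (b ^ j)⁻¹ = b ^ (i + d) * a ^ (m ^ d * k) * (b ^ (j + d))⁻¹ := by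
  have conj := ((semiconjBy_pow_zpow_pow h d).zpow_right k).eq
  rw [← zpow_mul] at conj
  calc b ^ i * a ^ k * (b ^ j)⁻¹ = b ^ i * (a ^ k * b ^ d) * (b ^ (j + d))⁻¹ := by
        rw [pow_add b j]
        group
    _ = b ^ (i + d) * a ^ (m ^ d * k) * (b ^ (j + d))⁻¹ := by
        rw [← conj, pow_add b i]
        simp only [mul_assoc]

theorem exists_eq_pow_mul_zpow_mul_inv_pow (h : SemiconjBy b (a ^ m) a) {x : G}
    (hx : x ∈ Subgroup.closure {a, b}) :
    ∃ (i j : ℕ) (k : ℤ), x = b ^ i * a ^ k * (b ^ j)⁻¹ := by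
  induction hx using Subgroup.closure_induction with
  | mem x hx =>
    obtain rfl | rfl := hx
    · exact ⟨0, 0, 1, by simp⟩
    · exact ⟨1, 0, 0, by simp⟩
  | one => exact ⟨0, 0, 0, by simp⟩
  | mul x y _ _ hx hy =>
    obtain ⟨i, j, k, rfl⟩ := hx
    obtain ⟨i', j', k', rfl⟩ := hy
    refine ⟨i + i', j' + j, m ^ i' * k + m ^ j * k', ?_⟩
    rw [pow_mul_zpow_mul_inv_pow h i j i', pow_mul_zpow_mul_inv_pow h i' j' j, add_comm i' j,
      zpow_add]
    simp only [mul_assoc, inv_mul_cancel_left]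
  | inv x _ hx =>
    obtain ⟨i, j, k, rfl⟩ := hx
    exact ⟨j, i, -k, by simp [mul_assoc]⟩

end NormalForm

theorem isPGroup_zpowers {p n : ℕ} [Fact p.Prime] {G : Type*} [Group G] {x : G}
    (hx : x ^ p ^ n = 1) : IsPGroup p (Subgroup.zpowers x) :=
  IsPGroup.of_card_dvd_pow (by rw [Nat.card_zpowers]; exact orderOf_dvd_of_pow_eq_one hx)

/-- The action of a group of units of `R` on the additive group of `R` by multiplication; its
semidirect product is a group of affine maps `x ↦ ux + c`. -/
def unitsAction {R : Type*} [CommRing R] (U : Subgroup Rˣ) : U →* MulAut (Multiplicative R) :=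
  (MulAutMultiplicative R).symm.toMonoidHom.comp (DistribMulAction.toAddAut U R)

/-- The action of a group `C` on the free group with basis `C` by left translation of the basis. -/
def freeGroupTranslation (C : Type*) [Group C] : C →* MulAut (FreeGroup C) where
  toFun c := FreeGroup.freeGroupCongr (Equiv.mulLeft c)
  map_one' := by ext; simp
  map_mul' c d := by
    ext x
    simp [FreeGroup.map.comp, Function.comp_def]

/-- The homomorphism `F(C) ⋊ C → Q` which is the inclusion on `C` and sends the basis element `1`
of the free group to `y`. -/
def freeGroupTranslationHom {Q : Type*} [Group Q] (C : Subgroup Q) (y : Q) :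
    FreeGroup C ⋊[freeGroupTranslation C] C →* Q :=
  SemidirectProduct.lift (FreeGroup.lift fun c ↦ c * y * (c : Q)⁻¹) C.subtype fun c ↦ by
    ext d
    simp [freeGroupTranslation, mul_assoc]

namespace BS

/-- The representation of `G(1,m)` by affine maps in which `a` is the translation by `1` and `b`
the division by `m`. -/
def toAffine {R : Type*} [CommRing R] {m : ℤ} (u : Rˣ) (hu : (u : R) = m) :
    BS 1 m →* Multiplicative R ⋊[unitsAction (Subgroup.zpowers u)] Subgroup.zpowers u :=
  lift (.inl (.ofAdd 1)) (.inr ⟨u, Subgroup.mem_zpowers u⟩⁻¹) <| by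
    rw [zpow_one, ← map_inv, inv_inv, ← SemidirectProduct.inl_aut, ← map_zpow]
    congr 1
    simp [unitsAction, Subgroup.smul_def, Units.smul_def, ← ofAdd_zsmul, hu]

theorem toAffine_a_zpow {R : Type*} [CommRing R] {m : ℤ} (u : Rˣ) (hu : (u : R) = m) (k : ℤ) :
    toAffine u hu (a 1 m ^ k) = .inl (.ofAdd (k : R)) := by
  rw [map_zpow, toAffine, lift_a, ← map_zpow, ← ofAdd_zsmul, zsmul_one]

section Unit

variable {p : ℕ} [hp : Fact p.Prime] {m : ℤ}

theorem pSeparated_a_zpow (hm : m ≡ 1 [ZMOD p]) {k : ℤ} (hk : k ≠ 0) :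
    PSeparated p (a 1 m ^ k) := by
  obtain ⟨N, hN⟩ := exists_intCast_zmod_pow_ne_zero hp.out.one_lt hk
  obtain ⟨t, ht⟩ := hm.symm.dvd
  have m_pow_eq_one : (m : ZMod (p ^ N)) ^ p ^ N = 1 := by
    rw [eq_add_of_sub_eq' ht]
    push_cast
    refine one_add_natCast_mul_pow_pow_eq_one ?_ _
    rw [← Nat.cast_pow, ZMod.natCast_self]
  let u : (ZMod (p ^ N))ˣ := Units.ofPowEqOne _ _ m_pow_eq_one (NeZero.ne _)
  have u_pow_eq_one : u ^ p ^ N = 1 := Units.pow_ofPowEqOne _ _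
  refine PSeparated.of_map (toAffine u rfl) <|
    (ResiduallyPGroup.of_isPGroup (isPGroup_multiplicative_zmod_pow N)).semidirectProduct
      (isPGroup_zpowers u_pow_eq_one) _ _ fun h ↦ hN ?_
  have inl_eq_one := (toAffine_a_zpow u rfl k).symm.trans h
  rw [← map_one SemidirectProduct.inl, SemidirectProduct.inl_inj] at inl_eq_one
  exact inl_eq_one

theorem residuallyPGroup_one (hm : m ≡ 1 [ZMOD p]) : ResiduallyPGroup p (BS 1 m) := by
  let exponentSum : BS 1 m →* Multiplicative ℤ := lift 1 (.ofAdd 1) (by simp)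
  refine residuallyPGroup_multiplicative_int.of_ker exponentSum fun x hx hx1 ↦ ?_
  obtain ⟨i, j, k, rfl⟩ := exists_eq_pow_mul_zpow_mul_inv_pow (x := x) (m := m)
    (by simpa using semiconjBy_b 1 m) (by rw [closure_a_b]; exact Subgroup.mem_top x)
  obtain rfl : i = j := by
    have exponentSum_eq : (i : ℤ) - j = 0 := by
      simpa [exponentSum, ← ofAdd_nsmul, ← ofAdd_neg, ← ofAdd_add, sub_eq_add_neg] using hx
    lia
  have k_ne_zero : k ≠ 0 := by
    rintro rfl
    simp at hx1
  refine PSeparated.of_conj (g := (b 1 m ^ i)⁻¹) ?_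
  simpa [mul_assoc] using pSeparated_a_zpow hm k_ne_zero

end Unit

section Translation

variable {l m : ℤ}

theorem exists_hom_semidirectProduct_ker_le (N : Subgroup (BS l m)) [N.Normal]
    (hl : a l m ^ l ∈ N) (hm : a l m ^ m ∈ N) :
    ∃ f : BS l m →* FreeGroup (Subgroup.zpowers (a l m : BS l m ⧸ N)) ⋊[freeGroupTranslation _]
      Subgroup.zpowers (a l m : BS l m ⧸ N), f.ker ≤ N := by
  set C := Subgroup.zpowers (a l m : BS l m ⧸ N)
  let c : C := ⟨a l m, Subgroup.mem_zpowers _⟩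
  have c_zpow_eq_one {k : ℤ} (hk : a l m ^ k ∈ N) : c ^ k = 1 :=
    Subtype.ext ((QuotientGroup.eq_one_iff _).2 hk)
  let f : BS l m →* FreeGroup C ⋊[freeGroupTranslation C] C :=
    lift (.inr c) (.inl (.of 1)) <| by
      simp [← map_zpow, c_zpow_eq_one hl, c_zpow_eq_one hm]
  have comp_eq_mk : (freeGroupTranslationHom C (b l m)).comp f = QuotientGroup.mk' N :=
    hom_ext (by simp [f, freeGroupTranslationHom, c]) (by simp [f, freeGroupTranslationHom])
  refine ⟨f, fun x hx ↦ (QuotientGroup.eq_one_iff x).1 ?_⟩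
  rw [← QuotientGroup.mk'_apply, ← comp_eq_mk, MonoidHom.comp_apply, hx, map_one]

theorem normal_zpowers_a_zpow {ε : ℤ} (hε : IsUnit ε) :
    (Subgroup.zpowers (a l (l * ε) ^ l)).Normal := by
  have conj_a : a l (l * ε) * a l (l * ε) ^ l * (a l (l * ε))⁻¹ = a l (l * ε) ^ l :=
    ((Commute.refl _).zpow_right l).mul_inv_cancel
  have conj_b : b l (l * ε) * (a l (l * ε) ^ l) ^ ε * (b l (l * ε))⁻¹ = a l (l * ε) ^ l := by
    rw [← zpow_mul, (semiconjBy_b l (l * ε)).eq, mul_inv_cancel_right]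
  have zpowers_eq : Subgroup.zpowers ((a l (l * ε) ^ l) ^ ε) =
      Subgroup.zpowers (a l (l * ε) ^ l) := by
    obtain rfl | rfl := Int.isUnit_iff.1 hε <;> simp
  rw [← Subgroup.normalizer_eq_top_iff, eq_top_iff, ← closure_a_b, Subgroup.closure_le]
  rintro _ (rfl | rfl)
  · rw [SetLike.mem_coe, Subgroup.mem_normalizer_iff_map_conj_eq, MonoidHom.map_zpowers]
    simp [conj_a]
  · rw [SetLike.mem_coe, Subgroup.mem_normalizer_iff_map_conj_eq]
    nth_rw 1 [← zpowers_eq]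
    rw [MonoidHom.map_zpowers]
    simp [conj_b]

end Translation

section PrimePower

variable {p : ℕ} [hp : Fact p.Prime] {l m ε : ℤ} {r : ℕ}

variable (l ε : ℤ) in
/-- The homomorphism `G(l,lε) → G(1,ε)` fixing `a` and `b`. -/
def toBSOne : BS l (l * ε) →* BS 1 ε := lift (a 1 ε) (b 1 ε) <| by
  rw [mul_comm, zpow_mul, ← inv_b_mul_a_zpow_mul_b, zpow_one]
  simpa using (conj_zpow (a := (b 1 ε)⁻¹) (b := a 1 ε) (i := l)).symm

theorem residuallyPGroup_of_eq_prime_pow (hl : l = p ^ r) (hm : m = l * ε) (hε : IsUnit ε)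
    (hεp : ε ≡ 1 [ZMOD p]) : ResiduallyPGroup p (BS l m) := by
  subst hm
  set N := Subgroup.zpowers (a l (l * ε) ^ l)
  have : N.Normal := normal_zpowers_a_zpow hε
  have mem_N : a l (l * ε) ^ l ∈ N := Subgroup.mem_zpowers _
  obtain ⟨f, hf⟩ := exists_hom_semidirectProduct_ker_le N mem_N <| by
    rw [zpow_mul]
    exact N.zpow_mem mem_N ε
  have pow_eq_one : (a l (l * ε) : BS l (l * ε) ⧸ N) ^ p ^ r = 1 := by
    rw [← zpow_natCast, Nat.cast_pow, ← hl, ← QuotientGroup.mk_zpow, QuotientGroup.eq_one_iff]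
    exact mem_N
  have : Finite (Subgroup.zpowers (a l (l * ε) : BS l (l * ε) ⧸ N)) :=
    (isOfFinOrder_iff_pow_eq_one.2 ⟨p ^ r, pow_pos hp.out.pos r, pow_eq_one⟩).finite_zpowers
  refine ((residuallyPGroup_freeGroup p _).semidirectProduct
    (isPGroup_zpowers pow_eq_one) _).of_ker f fun x hx hx1 ↦ ?_
  obtain ⟨k, rfl⟩ := Subgroup.mem_zpowers_iff.1 (hf hx)
  rw [← zpow_mul] at hx1 ⊢
  refine PSeparated.of_map (toBSOne _ ε) ?_
  rw [map_zpow, toBSOne, lift_a]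
  refine pSeparated_a_zpow hεp fun hk ↦ hx1 ?_
  rw [hk, zpow_zero]

end PrimePower

end BS

/-- **Theorem 3.** For `|m| ≥ l > 0`, the Baumslag–Solitar group
`G(l,m) = ⟨a, b; b⁻¹aˡb = aᵐ⟩` is residually a finite `p`-group iff either `l = 1` and
`m ≡ 1 (mod p)`, or `|m| = l = p^r` for some `r ≥ 0` and moreover `p = 2` whenever `m = -l`. -/
theorem bs_residually_p_iff (p : ℕ) (hp : p.Prime) (l m : ℤ) (hl : 0 < l) (hml : l ≤ |m|) :
    ResiduallyPGroup p (BS l m) ↔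
      (l = 1 ∧ m ≡ 1 [ZMOD (p : ℤ)]) ∨
      ((∃ r : ℕ, |m| = l ∧ l = (p : ℤ) ^ r) ∧ (m = -l → p = 2)) := by
  have : Fact p.Prime := ⟨hp⟩
  have hm : m ≠ 0 := by rintro rfl; simp [hl.not_ge] at hml
  constructor
  · intro h
    obtain rfl | hl1 := eq_or_ne l 1
    · rw [← one_mul m] at h
      exact .inl ⟨rfl, BS.modEq_one_of_residuallyPGroup h hl.ne' hm⟩
    have not_isUnit_l : ¬ IsUnit l := by rw [Int.isUnit_iff]; lia
    have not_isUnit_m : ¬ IsUnit m := by rw [Int.isUnit_iff_abs_eq]; lia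
    have abs_eq := BS.abs_eq_abs_of_residuallyPGroup h hl.ne' hm not_isUnit_l not_isUnit_m
    obtain ⟨r, hr⟩ := BS.exists_abs_eq_pow h hl.ne' hm not_isUnit_m
    rw [abs_of_pos hl] at abs_eq hr
    refine .inr ⟨⟨r, abs_eq, hr⟩, ?_⟩
    rintro rfl
    exact BS.eq_two_of_residuallyPGroup_neg h hl.ne'
  · rintro (⟨rfl, h⟩ | ⟨⟨r, abs_eq, hr⟩, h⟩)
    · exact BS.residuallyPGroup_one h
    · obtain rfl | rfl := eq_or_eq_neg_of_abs_eq abs_eq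
      · exact BS.residuallyPGroup_of_eq_prime_pow hr (mul_one _).symm isUnit_one rfl
      · obtain rfl := h rfl
        exact BS.residuallyPGroup_of_eq_prime_pow hr (mul_neg_one _).symm isUnit_neg_one rfl
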